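/- Let D be an oriented bipartite graph with bipartition (A,B), where |A| = m ≥ 2 and |B| = n ≥ 2. If every vertex u in A has out-degree at least n/3 and every vertex v in B has out-degree at least m/3, then D contains a directed cycle of length 4. (Exceptional case excluded: assume D is not isomorphic to the extremal digraph D*(m,n) described below.) Here D*(m,n) is defined when 3 | m and 3 | n by partitioning A = M0 ∪ M1 ∪ M2 with |Mi| = m/3 and B = N0 ∪ N1 ∪ N2 with |Ni| = n/3, and taking all arcs from Mi to Ni and all arcs from Ni to M(i+1 mod 3), for i = 0,1,2. -/

import Mathlib

open Finset

/-- The digraph given by arc relation `E` contains a directed cycle of length 4. -/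
def HasDirC4 {V : Type*} (E : V → V → Prop) : Prop :=
  ∃ a b c d : V, a ≠ b ∧ a ≠ c ∧ a ≠ d ∧ b ≠ c ∧ b ≠ d ∧ c ≠ d ∧
    E a b ∧ E b c ∧ E c d ∧ E d a

/-- Out-degree of a vertex in the digraph `E`. -/
def OutDeg {V : Type*} [Fintype V] (E : V → V → Prop) [DecidableRel E] (u : V) : ℕ :=
  (Finset.univ.filter fun w => E u w).card

/-- In-degree of a vertex in the digraph `E`. -/
def InDeg {V : Type*} [Fintype V] (E : V → V → Prop) [DecidableRel E] (u : V) : ℕ :=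
  (Finset.univ.filter fun w => E w u).card

/-- `E` is the extremal digraph `D*(|A|,|B|)` on the bipartition `(A,B)`:
the parts split into three equal blocks `M i`, `N i` with all arcs from
`M i` to `N i` and from `N i` to `M (i+1)`, indices mod 3. -/
def IsDStar {V : Type*} [DecidableEq V] (A B : Finset V) (E : V → V → Prop) : Prop :=
  ∃ M N : ZMod 3 → Finset V,
    (∀ i j, i ≠ j → Disjoint (M i) (M j)) ∧
    (∀ i j, i ≠ j → Disjoint (N i) (N j)) ∧
    M 0 ∪ M 1 ∪ M 2 = A ∧ N 0 ∪ N 1 ∪ N 2 = B ∧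
    (∀ i, 3 * (M i).card = A.card) ∧ (∀ i, 3 * (N i).card = B.card) ∧
    (∀ u v, E u v ↔ ∃ i, (u ∈ M i ∧ v ∈ N i) ∨ (u ∈ N i ∧ v ∈ M (i + 1)))

/-! Suppose there is no closed walk of length 4. Let `P` and `Q` be the transition matrices of the
random walk from `A` to `B` and from `B` to `A`, minus their uniform parts `J / |B|` and
`J / |A|`. Then `tr (P Q) = tr (P Q P Q) = -1`, and the degree conditions say `‖P‖² ≤ 2 |A| / |B|`
and `‖Q‖² ≤ 2 |B| / |A|` in the Frobenius norm. With `s = |B| / |A|` and `t = |A| / |B|` this forces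
equality in the inequality `0 ≤ (s ‖P‖² + t ‖Q‖² + 2 tr (P Q))² / 4 + tr (P Q P Q)`, valid for all
real matrices when `s t = 1`.

To prove the inequality, scale to `s = t = 1` and put `F = P + Qᵀ`, `D = P - Qᵀ`. It becomes
`‖K‖² ≤ 4 ‖F‖⁴ + ‖F Fᵀ - D Dᵀ‖²` for the skew-symmetric matrix `K = F Dᵀ - D Fᵀ`. After an
orthogonal change of basis `D Dᵀ` is diagonal; let `S` be the sum of its two largest entries.
Then `‖K‖² = 2 ⟨K D, F⟩` and `2 ‖K D‖² ≤ S ‖K‖²`, so `‖K‖² ≤ 2 S ‖F‖²` by Cauchy-Schwarz, and the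
last term of the inequality is at least `(S - ‖F‖²)² / 2` when `S ≥ ‖F‖²`.

At equality the gradient in `P` vanishes. For the original transition matrices this says that
`|B| P v u + |A| Q u v + |A| (Q P Q) u v = 3` for all `u ∈ B` and `v ∈ A`. As `|A| Q = 3` on
arcs, the out-neighbours of a vertex two steps after `u` are exactly the vertices of the opposite
part not adjacent to `u`. Hence directed 6-cycles exist, and the out-neighbourhoods of the
vertices of any one of them are the blocks of the extremal digraph.
-/

section TraceInequality

open Matrix

variable {ι κ : Type*} [Fintype κ]

/-- The matrix `F Dᵀ - D Fᵀ`, the obstruction to `F Dᵀ` being symmetric. -/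
def skewProduct (F D : Matrix ι κ ℝ) : Matrix ι ι ℝ :=
  F * Dᵀ - D * Fᵀ

theorem transpose_skewProduct (F D : Matrix ι κ ℝ) : (skewProduct F D)ᵀ = -skewProduct F D := by
  simp [skewProduct]

variable [Fintype ι]

theorem trace_mul_transpose_nonneg (A : Matrix ι κ ℝ) : 0 ≤ trace (A * Aᵀ) := by
  rw [← sum_hadamard_eq]
  exact sum_nonneg fun i _ => sum_nonneg fun j _ => mul_self_nonneg _

theorem sq_trace_mul_transpose_le (A B : Matrix ι κ ℝ) :
    trace (A * Bᵀ) ^ 2 ≤ trace (A * Aᵀ) * trace (B * Bᵀ) := by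
  simp only [← sum_hadamard_eq, hadamard_apply, ← Fintype.sum_prod_type', ← sq]
  exact sum_mul_sq_le_sq_mul_sq univ (fun x : ι × κ => A x.1 x.2) fun x => B x.1 x.2

theorem sum_sq_diag_le_trace_mul_transpose (L : Matrix ι ι ℝ) :
    ∑ i, L i i ^ 2 ≤ trace (L * Lᵀ) := by
  rw [← sum_hadamard_eq]
  refine sum_le_sum fun i _ => ?_
  rw [sq]
  exact single_le_sum (f := fun j => L i j * L i j) (fun j _ => mul_self_nonneg _) (mem_univ i)

theorem trace_skew_mul_diagonal_mul_transpose_le [DecidableEq ι] {K : Matrix ι ι ℝ} (hK : Kᵀ = -K)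
    {s : ι → ℝ} {S : ℝ} (hS : ∀ i j, i ≠ j → s i + s j ≤ S) :
    2 * trace (K * diagonal s * Kᵀ) ≤ S * trace (K * Kᵀ) := by
  have hskew : ∀ i j, K j i = -K i j := fun i j => congrFun (congrFun hK i) j
  have hswap : ∑ i, ∑ j, K i j ^ 2 * s j = ∑ i, ∑ j, K i j ^ 2 * s i := by
    rw [sum_comm]
    exact sum_congr rfl fun i _ => sum_congr rfl fun j _ => by rw [hskew i j, neg_sq]
  calc 2 * trace (K * diagonal s * Kᵀ)
      = 2 * ∑ i, ∑ j, K i j ^ 2 * s j := by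
        simp only [← sum_hadamard_eq, hadamard_apply, mul_diagonal, mul_right_comm _ _ (K _ _),
          ← sq]
    _ = ∑ i, ∑ j, K i j ^ 2 * (s i + s j) := by
        simp only [mul_add, sum_add_distrib, ← hswap]
        ring
    _ ≤ ∑ i, ∑ j, K i j ^ 2 * S := by
        refine sum_le_sum fun i _ => sum_le_sum fun j _ => ?_
        rcases eq_or_ne i j with rfl | hij
        · have hdiag : K i i = 0 := by linarith [hskew i i]
          simp [hdiag]
        · exact mul_le_mul_of_nonneg_left (hS i j hij) (sq_nonneg _)
    _ = S * trace (K * Kᵀ) := by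
        simp only [← sum_hadamard_eq, hadamard_apply, ← sum_mul, ← sq, mul_comm S]

theorem trace_skewProduct_mul_transpose_le [DecidableEq ι] (F : Matrix ι κ ℝ) {D : Matrix ι κ ℝ}
    {s : ι → ℝ} (hD : D * Dᵀ = diagonal s) {S : ℝ} (hS0 : 0 ≤ S)
    (hS : ∀ i j, i ≠ j → s i + s j ≤ S) :
    trace (skewProduct F D * (skewProduct F D)ᵀ) ≤ 2 * S * trace (F * Fᵀ) := by
  set K := skewProduct F D with hKdef
  have hK : Kᵀ = -K := transpose_skewProduct F D
  have hpair : trace (K * Kᵀ) = 2 * trace (K * D * Fᵀ) := by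
    have hflip : trace (K * F * Dᵀ) = -trace (K * D * Fᵀ) := by
      rw [← trace_transpose]
      simp only [transpose_mul, transpose_transpose, hK, Matrix.mul_neg, trace_neg]
      rw [← Matrix.mul_assoc, trace_mul_comm, ← Matrix.mul_assoc]
    have hKt : Kᵀ = D * Fᵀ - F * Dᵀ := by rw [hK, hKdef, skewProduct, neg_sub]
    rw [hKt, Matrix.mul_sub, trace_sub, ← Matrix.mul_assoc, ← Matrix.mul_assoc, hflip]
    ring
  have hKD : 2 * trace (K * D * (K * D)ᵀ) ≤ S * trace (K * Kᵀ) := by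
    rw [transpose_mul, ← Matrix.mul_assoc, Matrix.mul_assoc K, hD]
    exact trace_skew_mul_diagonal_mul_transpose_le hK hS
  have hF := trace_mul_transpose_nonneg F
  have hsq : trace (K * Kᵀ) * trace (K * Kᵀ) ≤ 2 * S * trace (F * Fᵀ) * trace (K * Kᵀ) := by
    have hCS := sq_trace_mul_transpose_le (K * D) F
    rw [hpair] at hKD ⊢
    nlinarith [mul_le_mul_of_nonneg_right hKD hF]
  rcases (trace_mul_transpose_nonneg K).eq_or_lt with h0 | hpos
  · rw [← h0]
    positivity
  · exact le_of_mul_le_mul_right hsq hpos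

theorem trace_skewProduct_le_of_mul_transpose_eq_diagonal [DecidableEq ι] (F : Matrix ι κ ℝ)
    {D : Matrix ι κ ℝ} {s : ι → ℝ} (hD : D * Dᵀ = diagonal s) :
    trace (skewProduct F D * (skewProduct F D)ᵀ) ≤
      4 * trace (F * Fᵀ) ^ 2 + trace ((F * Fᵀ - D * Dᵀ) * (F * Fᵀ - D * Dᵀ)ᵀ) := by
  set L := F * Fᵀ - D * Dᵀ
  have hdiag : ∀ (A : Matrix ι κ ℝ) i, 0 ≤ (A * Aᵀ) i i := fun A i =>
    sum_nonneg fun j _ => mul_self_nonneg _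
  have hs : ∀ i, 0 ≤ s i := fun i => by simpa [hD] using hdiag D i
  rcases subsingleton_or_nontrivial ι with hι | hι
  · have hbound := trace_skewProduct_mul_transpose_le F hD le_rfl
      fun i j hij => (hij (Subsingleton.elim i j)).elim
    nlinarith [trace_mul_transpose_nonneg L, sq_nonneg (trace (F * Fᵀ))]
  obtain ⟨x, y, hxy⟩ := exists_pair_ne ι
  obtain ⟨⟨u, v⟩, huv, hmax⟩ := exists_max_image univ.offDiag (fun x : ι × ι => s x.1 + s x.2)
    ⟨(x, y), by simpa using hxy⟩
  have huv : u ≠ v := (mem_offDiag.1 huv).2.2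
  set S := s u + s v
  set N := trace (F * Fᵀ)
  set f := (F * Fᵀ) u u + (F * Fᵀ) v v
  have hskew : trace (skewProduct F D * (skewProduct F D)ᵀ) ≤ 2 * S * N :=
    trace_skewProduct_mul_transpose_le F hD (add_nonneg (hs u) (hs v))
      fun i j hij => hmax (i, j) (by simpa using hij)
  have hfN : f ≤ N := by
    have := sum_le_univ_sum_of_nonneg (s := {u, v}) (hdiag F)
    rwa [sum_pair huv] at this
  have hL : (S - f) ^ 2 ≤ 2 * trace (L * Lᵀ) := by
    have hpair := (sum_le_univ_sum_of_nonneg (s := {u, v}) fun i => sq_nonneg (L i i)).trans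
      (sum_sq_diag_le_trace_mul_transpose L)
    have hLs : ∀ i, L i i = (F * Fᵀ) i i - s i := fun i => by simp [L, hD]
    rw [sum_pair huv, hLs, hLs] at hpair
    nlinarith [sq_nonneg (((F * Fᵀ) u u - s u) - ((F * Fᵀ) v v - s v))]
  have hN0 : 0 ≤ N := trace_mul_transpose_nonneg F
  rcases le_total S N with hSN | hNS
  · nlinarith [trace_mul_transpose_nonneg L]
  · have : (S - N) ^ 2 ≤ (S - f) ^ 2 := pow_le_pow_left₀ (by linarith) (by linarith) 2
    nlinarith [sq_nonneg (S - 3 * N)]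

theorem exists_orthogonal_conj_eq_diagonal [DecidableEq ι] {G : Matrix ι ι ℝ} (hG : G.IsSymm) :
    ∃ W : Matrix ι ι ℝ, Wᵀ * W = 1 ∧ ∃ s, W * G * Wᵀ = diagonal s := by
  have hH : G.IsHermitian := by rwa [IsHermitian, conjTranspose_eq_transpose_of_trivial]
  have hstar := hH.conjStarAlgAut_star_eigenvectorUnitary
  have hunit := Unitary.coe_mul_star_self hH.eigenvectorUnitary
  rw [Unitary.conjStarAlgAut_star_apply] at hstar
  simp only [Unitary.coe_star, star_eq_conjTranspose, conjTranspose_eq_transpose_of_trivial]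
    at hstar hunit
  exact ⟨(hH.eigenvectorUnitary : Matrix ι ι ℝ)ᵀ, by rwa [transpose_transpose], _,
    by rwa [transpose_transpose]⟩

theorem trace_conj_mul_transpose [DecidableEq ι] {W : Matrix ι ι ℝ} (hW : Wᵀ * W = 1)
    (L : Matrix ι ι ℝ) : trace (W * L * Wᵀ * (W * L * Wᵀ)ᵀ) = trace (L * Lᵀ) := by
  have hconj : W * L * Wᵀ * (W * L * Wᵀ)ᵀ = W * (L * (Wᵀ * W) * Lᵀ * Wᵀ) := by
    simp only [transpose_mul, transpose_transpose, Matrix.mul_assoc]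
  rw [hconj, trace_mul_comm, hW, Matrix.mul_assoc, hW, Matrix.mul_one, Matrix.mul_one]

theorem trace_skewProduct_le (F D : Matrix ι κ ℝ) :
    trace (skewProduct F D * (skewProduct F D)ᵀ) ≤
      4 * trace (F * Fᵀ) ^ 2 + trace ((F * Fᵀ - D * Dᵀ) * (F * Fᵀ - D * Dᵀ)ᵀ) := by
  classical
  obtain ⟨W, hW, s, hs⟩ := exists_orthogonal_conj_eq_diagonal (G := D * Dᵀ)
    (by simp [IsSymm])
  have hprod : ∀ A B : Matrix ι κ ℝ, W * A * (W * B)ᵀ = W * (A * Bᵀ) * Wᵀ := fun A B => by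
    simp only [transpose_mul, Matrix.mul_assoc]
  have hskew : skewProduct (W * F) (W * D) = W * skewProduct F D * Wᵀ := by
    simp only [skewProduct, hprod, Matrix.mul_sub, Matrix.sub_mul]
  have hF : trace (W * (F * Fᵀ) * Wᵀ) = trace (F * Fᵀ) := by
    rw [trace_mul_comm, ← Matrix.mul_assoc, hW, Matrix.one_mul]
  have h := trace_skewProduct_le_of_mul_transpose_eq_diagonal (W * F) ((hprod D D).trans hs)
  rwa [hskew, hprod, hprod, ← Matrix.sub_mul, ← Matrix.mul_sub, trace_conj_mul_transpose hW,
    trace_conj_mul_transpose hW, hF] at h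

theorem sq_trace_add_trace_mul_transpose_sq_nonneg (P T : Matrix ι κ ℝ) :
    0 ≤ trace ((P + T) * (P + T)ᵀ) ^ 2 / 4 + trace (P * Tᵀ * (P * Tᵀ)) := by
  have h := trace_skewProduct_le (P + T) (P - T)
  set X := P * Tᵀ with hX
  have hXt : T * Pᵀ = Xᵀ := by simp [hX]
  have hskew : skewProduct (P + T) (P - T) = (2 : ℝ) • (Xᵀ - X) := by
    simp only [skewProduct, transpose_add, transpose_sub, Matrix.add_mul, Matrix.sub_mul,
      Matrix.mul_add, Matrix.mul_sub, ← hX, hXt]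
    module
  have hsymm : (P + T) * (P + T)ᵀ - (P - T) * (P - T)ᵀ = (2 : ℝ) • (X + Xᵀ) := by
    simp only [transpose_add, transpose_sub, Matrix.add_mul, Matrix.sub_mul,
      Matrix.mul_add, Matrix.mul_sub, ← hX, hXt]
    module
  have htr : trace (Xᵀ * Xᵀ) = trace (X * X) := by rw [← transpose_mul, trace_transpose]
  have htr' : trace (Xᵀ * X) = trace (X * Xᵀ) := trace_mul_comm _ _
  rw [hskew, hsymm] at h
  simp only [transpose_smul, transpose_add, transpose_sub, transpose_transpose, Matrix.add_mul,
    Matrix.sub_mul, Matrix.mul_add, Matrix.mul_sub, Matrix.smul_mul, Matrix.mul_smul,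
    trace_add, trace_sub, trace_smul, smul_eq_mul, htr, htr'] at h ⊢
  linarith

theorem trace_smul_add_inv_smul_mul_transpose {s t : ℝ} (hs : 0 ≤ s) (hst : s * t = 1)
    (P : Matrix ι κ ℝ) (Q : Matrix κ ι ℝ) :
    trace ((√s • P + (√s)⁻¹ • Qᵀ) * (√s • P + (√s)⁻¹ • Qᵀ)ᵀ) =
      s * trace (P * Pᵀ) + t * trace (Q * Qᵀ) + 2 * trace (P * Q) := by
  have hr : √s * √s = s := Real.mul_self_sqrt hs
  have hr0 : √s ≠ 0 := fun h => left_ne_zero_of_mul_eq_one hst (by rw [← hr, h, mul_zero])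
  have ht : (√s)⁻¹ * (√s)⁻¹ = t := by rw [← mul_inv, hr, inv_eq_of_mul_eq_one_right hst]
  have htr : trace (Qᵀ * Pᵀ) = trace (P * Q) := by rw [← transpose_mul, trace_transpose]
  have htr' : trace (Qᵀ * Q) = trace (Q * Qᵀ) := trace_mul_comm _ _
  simp only [transpose_smul, transpose_add, transpose_transpose, Matrix.add_mul, Matrix.mul_add,
    Matrix.smul_mul, Matrix.mul_smul, trace_add, trace_smul, smul_eq_mul, mul_add, htr, htr',
    ← mul_assoc, hr, ht, mul_inv_cancel₀ hr0, inv_mul_cancel₀ hr0, one_mul]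
  ring

theorem weighted_trace_nonneg {s t : ℝ} (hs : 0 ≤ s) (hst : s * t = 1)
    (P : Matrix ι κ ℝ) (Q : Matrix κ ι ℝ) :
    0 ≤ s * trace (P * Pᵀ) + t * trace (Q * Qᵀ) + 2 * trace (P * Q) := by
  rw [← trace_smul_add_inv_smul_mul_transpose hs hst]
  exact trace_mul_transpose_nonneg _

theorem sq_weighted_trace_add_trace_mul_sq_nonneg {s t : ℝ} (hs : 0 ≤ s) (hst : s * t = 1)
    (P : Matrix ι κ ℝ) (Q : Matrix κ ι ℝ) :
    0 ≤ (s * trace (P * Pᵀ) + t * trace (Q * Qᵀ) + 2 * trace (P * Q)) ^ 2 / 4 +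
      trace (P * Q * (P * Q)) := by
  have hr0 : √s ≠ 0 := Real.sqrt_ne_zero'.2 (hs.lt_of_ne' (left_ne_zero_of_mul_eq_one hst))
  have hprod : √s • P * ((√s)⁻¹ • Qᵀ)ᵀ = P * Q := by
    rw [transpose_smul, transpose_transpose, Matrix.smul_mul, Matrix.mul_smul, smul_inv_smul₀ hr0]
  have h := sq_trace_add_trace_mul_transpose_sq_nonneg (√s • P) ((√s)⁻¹ • Qᵀ)
  rwa [trace_smul_add_inv_smul_mul_transpose hs hst, hprod] at h

theorem deriv_coeff_eq_zero_of_forall_nonneg {N u w x y z : ℝ} (h0 : N ^ 2 / 4 + x = 0)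
    (h : ∀ ε : ℝ, 0 ≤ (N + u * ε + w * ε ^ 2) ^ 2 / 4 + (x + y * ε + z * ε ^ 2)) :
    N * u + 2 * y = 0 := by
  set g : ℝ → ℝ := fun ε => (N + u * ε + w * ε ^ 2) ^ 2 / 4 + (x + y * ε + z * ε ^ 2) with hg
  have hmin : IsLocalMin g 0 := Filter.Eventually.of_forall fun ε => by simpa [hg, h0] using h ε
  have hquad : ∀ c d e : ℝ, HasDerivAt (fun ε : ℝ => c + d * ε + e * ε ^ 2) d 0 := fun c d e => by
    have hid := hasDerivAt_id' (0 : ℝ)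
    exact (((hid.const_mul d).const_add c).fun_add
      ((hid.fun_pow 2).const_mul e)).congr_deriv (by simp)
  have hderiv := hmin.hasDerivAt_eq_zero
    ((((hquad N u w).fun_pow 2).div_const 4).fun_add (hquad x y z))
  norm_num at hderiv
  linarith

theorem smul_weighted_gradient_eq_zero {s t : ℝ} (hs : 0 ≤ s) (hst : s * t = 1)
    {P : Matrix ι κ ℝ} {Q : Matrix κ ι ℝ} {N : ℝ}
    (hN : s * trace (P * Pᵀ) + t * trace (Q * Qᵀ) + 2 * trace (P * Q) = N)
    (heq : N ^ 2 / 4 + trace (P * Q * (P * Q)) = 0) :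
    N • (s • Pᵀ + Q) + (2 : ℝ) • (Q * P * Q) = 0 := by
  refine ext_iff_trace_mul_right.2 fun Z => ?_
  have hZPt : trace (Z * Pᵀ) = trace (Pᵀ * Z) := trace_mul_comm _ _
  have hPZt : trace (P * Zᵀ) = trace (Pᵀ * Z) := by
    rw [← trace_transpose, transpose_mul, transpose_transpose, hZPt]
  have hZQ : trace (Z * Q) = trace (Q * Z) := trace_mul_comm _ _
  have hPQZQ : trace (P * Q * (Z * Q)) = trace (Q * P * Q * Z) := by
    rw [← Matrix.mul_assoc, trace_mul_comm, Matrix.mul_assoc P, ← Matrix.mul_assoc,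
      ← Matrix.mul_assoc]
  have hZQPQ : trace (Z * Q * (P * Q)) = trace (Q * P * Q * Z) := by
    rw [trace_mul_comm, hPQZQ]
  have hvar := deriv_coeff_eq_zero_of_forall_nonneg (N := N)
    (u := 2 * (s * trace (Pᵀ * Z) + trace (Q * Z))) (w := s * trace (Z * Zᵀ))
    (y := 2 * trace (Q * P * Q * Z)) (z := trace (Z * Q * (Z * Q))) heq fun ε => by
      have h := sq_weighted_trace_add_trace_mul_sq_nonneg hs hst (P + ε • Z) Q
      simp only [transpose_add, transpose_smul, Matrix.add_mul, Matrix.mul_add, Matrix.smul_mul,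
        Matrix.mul_smul, trace_add, trace_smul, smul_eq_mul, hZPt, hPZt, hZQ, hPQZQ,
        hZQPQ] at h
      rw [← hN]
      convert h using 1
      ring
  simp only [Matrix.add_mul, Matrix.smul_mul, trace_add, trace_smul, smul_eq_mul, Matrix.zero_mul,
    trace_zero]
  linarith

end TraceInequality

section StochasticMatrices

open Matrix

variable {ι κ : Type*} [Fintype κ]

theorem uniform_dotProduct_one [Nonempty κ] : (fun _ : κ => (Fintype.card κ : ℝ)⁻¹) ⬝ᵥ 1 = 1 := by
  simp [dotProduct]

/-- The matrix `P - J / |κ|`, with `J` the all-ones matrix. When the rows of `P` sum to one, it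
is the part of `P` orthogonal to the random walk that forgets its position. -/
noncomputable def centered (P : Matrix ι κ ℝ) : Matrix ι κ ℝ :=
  P - vecMulVec 1 fun _ => (Fintype.card κ : ℝ)⁻¹

theorem centered_mulVec_one [Nonempty κ] {P : Matrix ι κ ℝ} (hP : P *ᵥ 1 = 1) :
    centered P *ᵥ 1 = 0 := by
  rw [centered, sub_mulVec, hP, vecMulVec_mulVec, uniform_dotProduct_one]
  simp

variable [Fintype ι]

theorem trace_sub_vecMulVec_one (X : Matrix ι ι ℝ) {c : ι → ℝ} (hc : c ⬝ᵥ 1 = 1) :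
    trace (X - vecMulVec 1 c) = trace X - 1 := by
  rw [trace_sub, trace_vecMulVec, dotProduct_comm, hc]

theorem trace_sub_vecMulVec_one_mul_self {X : Matrix ι ι ℝ} (hX : X *ᵥ 1 = 1) {c : ι → ℝ}
    (hc : c ⬝ᵥ 1 = 1) :
    trace ((X - vecMulVec 1 c) * (X - vecMulVec 1 c)) = trace (X * X) - 1 := by
  have hker : (X - vecMulVec 1 c) *ᵥ 1 = 0 := by
    rw [sub_mulVec, hX, vecMulVec_mulVec, hc]
    simp
  rw [Matrix.mul_sub, mul_vecMulVec, hker, zero_vecMulVec, sub_zero, Matrix.sub_mul,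
    vecMulVec_mul, trace_sub_vecMulVec_one _ (by rw [← dotProduct_mulVec, hX, hc])]

theorem centered_mul_centered [Nonempty κ] {P : Matrix ι κ ℝ} (hP : P *ᵥ 1 = 1)
    (Q : Matrix κ ι ℝ) :
    centered P * centered Q =
      P * Q - vecMulVec 1 ((fun _ => (Fintype.card κ : ℝ)⁻¹) ᵥ* Q) := by
  rw [centered.eq_def Q, Matrix.mul_sub, mul_vecMulVec, centered_mulVec_one hP, zero_vecMulVec,
    sub_zero, centered, Matrix.sub_mul, vecMulVec_mul]

theorem uniform_vecMul_dotProduct_one [Nonempty κ] {Q : Matrix κ ι ℝ} (hQ : Q *ᵥ 1 = 1) :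
    ((fun _ => (Fintype.card κ : ℝ)⁻¹) ᵥ* Q) ⬝ᵥ 1 = 1 := by
  rw [← dotProduct_mulVec, hQ, uniform_dotProduct_one]

theorem trace_centered_mul_transpose [Nonempty κ] {P : Matrix ι κ ℝ} (hP : P *ᵥ 1 = 1) :
    trace (centered P * (centered P)ᵀ) =
      trace (P * Pᵀ) - Fintype.card ι / Fintype.card κ := by
  have huniform : (fun _ : κ => (Fintype.card κ : ℝ)⁻¹) = (Fintype.card κ : ℝ)⁻¹ • 1 := by
    ext
    simp
  have hker : centered P *ᵥ (fun _ => (Fintype.card κ : ℝ)⁻¹) = 0 := by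
    rw [huniform, mulVec_smul, centered_mulVec_one hP, smul_zero]
  rw [centered.eq_def P, transpose_sub, transpose_vecMulVec, Matrix.mul_sub, ← centered,
    mul_vecMulVec, hker, zero_vecMulVec, sub_zero, centered, Matrix.sub_mul, vecMulVec_mul,
    trace_sub, trace_vecMulVec, vecMul_transpose, huniform, mulVec_smul, hP]
  simp [dotProduct, div_eq_mul_inv]

theorem centered_mul_centered_mul_centered [Nonempty ι] [Nonempty κ] {P : Matrix ι κ ℝ}
    {Q : Matrix κ ι ℝ} (hP : P *ᵥ 1 = 1) (hQ : Q *ᵥ 1 = 1) :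
    centered Q * centered P * centered Q =
      Q * P * Q - vecMulVec 1 ((fun _ => (Fintype.card ι : ℝ)⁻¹) ᵥ* (P * Q)) := by
  rw [Matrix.mul_assoc, centered_mul_centered hP, Matrix.mul_sub, mul_vecMulVec,
    centered_mulVec_one hQ, zero_vecMulVec, sub_zero, centered, Matrix.sub_mul, vecMulVec_mul,
    Matrix.mul_assoc]

theorem trace_centered_mul_centered_mul_self [Nonempty κ] {P : Matrix ι κ ℝ}
    {Q : Matrix κ ι ℝ} (hP : P *ᵥ 1 = 1) (hQ : Q *ᵥ 1 = 1) :
    trace (centered P * centered Q * (centered P * centered Q)) = trace (P * Q * (P * Q)) - 1 := by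
  rw [centered_mul_centered hP, trace_sub_vecMulVec_one_mul_self
    (by rw [← mulVec_mulVec, hQ, hP]) (uniform_vecMul_dotProduct_one hQ)]

variable [Nonempty ι] [Nonempty κ] {P : Matrix ι κ ℝ} {Q : Matrix κ ι ℝ}

theorem weighted_trace_centered (hP : P *ᵥ 1 = 1) (hQ : Q *ᵥ 1 = 1) (hPQ : trace (P * Q) = 0) :
    Fintype.card κ / Fintype.card ι * trace (centered P * (centered P)ᵀ) +
        Fintype.card ι / Fintype.card κ * trace (centered Q * (centered Q)ᵀ) +
        2 * trace (centered P * centered Q) =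
      Fintype.card κ / Fintype.card ι * trace (P * Pᵀ) +
        Fintype.card ι / Fintype.card κ * trace (Q * Qᵀ) - 4 := by
  rw [trace_centered_mul_transpose hP, trace_centered_mul_transpose hQ, centered_mul_centered hP,
    trace_sub_vecMulVec_one _ (uniform_vecMul_dotProduct_one hQ), hPQ]
  field_simp
  ring

theorem weighted_trace_eq_six (hP : P *ᵥ 1 = 1) (hQ : Q *ᵥ 1 = 1) (hPQ : trace (P * Q) = 0)
    (hPQPQ : trace (P * Q * (P * Q)) = 0)
    (hPle : Fintype.card κ / Fintype.card ι * trace (P * Pᵀ) ≤ 3)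
    (hQle : Fintype.card ι / Fintype.card κ * trace (Q * Qᵀ) ≤ 3) :
    Fintype.card κ / Fintype.card ι * trace (P * Pᵀ) +
      Fintype.card ι / Fintype.card κ * trace (Q * Qᵀ) = 6 := by
  have hst : (Fintype.card κ / Fintype.card ι : ℝ) * (Fintype.card ι / Fintype.card κ) = 1 := by
    field_simp
  have hineq := sq_weighted_trace_add_trace_mul_sq_nonneg (by positivity) hst (centered P)
    (centered Q)
  have hN := weighted_trace_nonneg (by positivity) hst (centered P) (centered Q)
  rw [weighted_trace_centered hP hQ hPQ, trace_centered_mul_centered_mul_self hP hQ, hPQPQ] at hineq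
  rw [weighted_trace_centered hP hQ hPQ] at hN
  nlinarith

theorem exists_arc_add_arc_add_walk_eq (hP : P *ᵥ 1 = 1) (hQ : Q *ᵥ 1 = 1)
    (hPQ : trace (P * Q) = 0) (hPQPQ : trace (P * Q * (P * Q)) = 0)
    (hPle : Fintype.card κ / Fintype.card ι * trace (P * Pᵀ) ≤ 3)
    (hQle : Fintype.card ι / Fintype.card κ * trace (Q * Qᵀ) ≤ 3) :
    ∃ d : ι → ℝ, ∀ k i, Fintype.card κ * P i k + Fintype.card ι * Q k i +
      Fintype.card ι * (Q * P * Q) k i = d i := by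
  have hN := weighted_trace_centered hP hQ hPQ
  rw [weighted_trace_eq_six hP hQ hPQ hPQPQ hPle hQle] at hN
  have hgrad := smul_weighted_gradient_eq_zero (by positivity) (by field_simp) hN (by
    rw [trace_centered_mul_centered_mul_self hP hQ, hPQPQ]
    norm_num)
  rw [centered_mul_centered_mul_centered hP hQ] at hgrad
  set c := (fun _ => (Fintype.card ι : ℝ)⁻¹) ᵥ* (P * Q)
  refine ⟨fun i => 2 + Fintype.card ι * c i, fun k i => ?_⟩
  have h := congrFun (congrFun hgrad k) i
  simp only [centered, Matrix.add_apply, Matrix.smul_apply, Matrix.sub_apply, transpose_apply,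
    vecMulVec_apply, Pi.one_apply, one_mul, smul_eq_mul, Matrix.zero_apply] at h
  field_simp at h
  linarith

end StochasticMatrices

section TransitionMatrices

open Matrix

variable {ι κ : Type*} [Fintype κ]

theorem exists_ne_zero_of_mul_apply_ne_zero {l : Type*} {A : Matrix ι κ ℝ} {B : Matrix κ l ℝ}
    {i : ι} {j : l} (h : (A * B) i j ≠ 0) : ∃ k, A i k ≠ 0 ∧ B k j ≠ 0 := by
  obtain ⟨k, -, hk⟩ := exists_ne_zero_of_sum_ne_zero h
  exact ⟨k, mul_ne_zero_iff.1 hk⟩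

theorem mul_apply_nonneg {l : Type*} {A : Matrix ι κ ℝ} {B : Matrix κ l ℝ}
    (hA : ∀ i k, 0 ≤ A i k) (hB : ∀ k j, 0 ≤ B k j) (i : ι) (j : l) : 0 ≤ (A * B) i j :=
  sum_nonneg fun k _ => mul_nonneg (hA i k) (hB k j)

theorem mul_apply_pos {l : Type*} {A : Matrix ι κ ℝ} {B : Matrix κ l ℝ}
    (hA : ∀ i k, 0 ≤ A i k) (hB : ∀ k j, 0 ≤ B k j) {i : ι} {k : κ} {j : l} (hik : 0 < A i k)
    (hkj : 0 < B k j) : 0 < (A * B) i j :=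
  sum_pos' (fun k _ => mul_nonneg (hA i k) (hB k j)) ⟨k, mem_univ k, mul_pos hik hkj⟩

theorem eq_of_dotProduct_eq_of_le {w x : κ → ℝ} {c : ℝ} (hw : ∀ k, 0 ≤ w k) (hw1 : w ⬝ᵥ 1 = 1)
    (hx : ∀ k, x k ≤ c) (hwx : w ⬝ᵥ x = c) {k : κ} (hk : 0 < w k) : x k = c := by
  have hsum : ∑ k, w k * (c - x k) = 0 := by
    have hw1' : ∑ k, w k = 1 := by simpa [dotProduct] using hw1
    simp only [mul_sub, sum_sub_distrib, ← sum_mul, hw1']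
    exact sub_eq_zero.2 (by rw [one_mul, ← hwx, dotProduct])
  have hterm := (sum_eq_zero_iff_of_nonneg fun k _ => mul_nonneg (hw k) (sub_nonneg.2 (hx k))).1
    hsum k (mem_univ k)
  exact (sub_eq_zero.1 ((mul_eq_zero.1 hterm).resolve_left hk.ne')).symm

/-- The transition matrix of the random walk that moves from `i` to a uniformly random `k` with
`p i k`. The row of `i` is zero when there is no such `k`. -/
noncomputable def transitionMatrix (p : ι → κ → Prop) [∀ i, DecidablePred (p i)] :
    Matrix ι κ ℝ :=
  of fun i k => if p i k then (#{k | p i k} : ℝ)⁻¹ else 0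

variable {p : ι → κ → Prop} [∀ i, DecidablePred (p i)]

theorem transitionMatrix_of_rel {i : ι} {k : κ} (h : p i k) :
    transitionMatrix p i k = (#{k | p i k} : ℝ)⁻¹ :=
  if_pos h

theorem rel_of_transitionMatrix_ne_zero {i : ι} {k : κ} (h : transitionMatrix p i k ≠ 0) :
    p i k := by
  by_contra hp
  exact h (if_neg hp)

theorem transitionMatrix_nonneg (i : ι) (k : κ) : 0 ≤ transitionMatrix p i k := by
  simp only [transitionMatrix, of_apply]
  split_ifs <;> positivity

theorem transitionMatrix_pos {i : ι} {k : κ} (h : p i k) : 0 < transitionMatrix p i k := by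
  rw [transitionMatrix_of_rel h, inv_pos, Nat.cast_pos, card_pos]
  exact ⟨k, by simpa using h⟩

theorem transitionMatrix_mulVec_one (hp : ∀ i, ∃ k, p i k) : transitionMatrix p *ᵥ 1 = 1 := by
  ext i
  have hdeg : #{k | p i k} ≠ 0 := by
    obtain ⟨k, hk⟩ := hp i
    exact card_ne_zero_of_mem (by simpa using hk)
  simp [transitionMatrix, mulVec, dotProduct, ← sum_filter, hdeg]

theorem exists_rel_of_card_le [Nonempty κ] {i : ι} (h : Fintype.card κ ≤ 3 * #{k | p i k}) :
    ∃ k, p i k := by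
  have hcard := Fintype.card_pos (α := κ)
  obtain ⟨k, hk⟩ := card_pos.1 (show 0 < #{k | p i k} by lia)
  exact ⟨k, by simpa using hk⟩

theorem card_mul_inv_degree_le [Nonempty κ] {i : ι} (h : Fintype.card κ ≤ 3 * #{k | p i k}) :
    Fintype.card κ * (#{k | p i k} : ℝ)⁻¹ ≤ 3 := by
  have hcard := Fintype.card_pos (α := κ)
  have hpos : (0 : ℝ) < #{k | p i k} := by
    rw [Nat.cast_pos]
    lia
  rw [← div_eq_mul_inv, div_le_iff₀ hpos]
  exact_mod_cast h

variable [Fintype ι]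

theorem trace_transitionMatrix_mul_transpose :
    trace (transitionMatrix p * (transitionMatrix p)ᵀ) = ∑ i, (#{k | p i k} : ℝ)⁻¹ := by
  rw [← sum_hadamard_eq]
  refine sum_congr rfl fun i _ => ?_
  simp only [hadamard_apply, transitionMatrix, of_apply, mul_ite, mul_zero, ite_mul, zero_mul,
    ← ite_and, and_self, ← sum_filter, sum_const, nsmul_eq_mul]
  rw [← mul_assoc]
  simpa using inv_mul_mul_self (#{k | p i k} : ℝ)⁻¹

variable [Nonempty κ]

theorem weighted_trace_transitionMatrix_le (hp : ∀ i, Fintype.card κ ≤ 3 * #{k | p i k}) :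
    Fintype.card κ / Fintype.card ι *
      trace (transitionMatrix p * (transitionMatrix p)ᵀ) ≤ 3 := by
  rw [trace_transitionMatrix_mul_transpose, div_mul_eq_mul_div, mul_sum]
  refine div_le_of_le_mul₀ (Nat.cast_nonneg _) (by norm_num) ?_
  refine (sum_le_sum fun i _ => card_mul_inv_degree_le (hp i)).trans_eq ?_
  simp [mul_comm]

theorem card_mul_transitionMatrix_of_rel [Nonempty ι]
    (hp : ∀ i, Fintype.card κ ≤ 3 * #{k | p i k})
    (htr : Fintype.card κ / Fintype.card ι *
      trace (transitionMatrix p * (transitionMatrix p)ᵀ) = 3) {i : ι} {k : κ} (h : p i k) :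
    Fintype.card κ * transitionMatrix p i k = 3 := by
  rw [trace_transitionMatrix_mul_transpose, div_mul_eq_mul_div, mul_sum,
    div_eq_iff (by positivity)] at htr
  rw [transitionMatrix_of_rel h]
  refine (sum_eq_sum_iff_of_le fun i _ => card_mul_inv_degree_le (hp i)).1 ?_ i (mem_univ i)
  simpa [mul_comm] using htr

end TransitionMatrices

section NoClosedFourWalk

open Matrix

variable {α β : Type*} [Fintype α] [Fintype β] {p : α → β → Prop} {q : β → α → Prop}
  [∀ a, DecidablePred (p a)] [∀ b, DecidablePred (q b)]

theorem trace_transitionMatrix_mul_eq_zero (hpq : ∀ a b, p a b → ¬ q b a) :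
    trace (transitionMatrix p * transitionMatrix q) = 0 := by
  refine sum_eq_zero fun a _ => ?_
  by_contra h
  obtain ⟨b, hab, hba⟩ := exists_ne_zero_of_mul_apply_ne_zero h
  exact hpq a b (rel_of_transitionMatrix_ne_zero hab) (rel_of_transitionMatrix_ne_zero hba)

theorem trace_transitionMatrix_mul_mul_self_eq_zero
    (hC4 : ∀ a b a' b', p a b → q b a' → p a' b' → ¬ q b' a) :
    trace (transitionMatrix p * transitionMatrix q *
      (transitionMatrix p * transitionMatrix q)) = 0 := by
  refine sum_eq_zero fun a _ => ?_
  by_contra h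
  obtain ⟨a', haa', ha'a⟩ := exists_ne_zero_of_mul_apply_ne_zero h
  obtain ⟨b, hab, hba'⟩ := exists_ne_zero_of_mul_apply_ne_zero haa'
  obtain ⟨b', hab', hba⟩ := exists_ne_zero_of_mul_apply_ne_zero ha'a
  exact hC4 a b a' b' (rel_of_transitionMatrix_ne_zero hab) (rel_of_transitionMatrix_ne_zero hba')
    (rel_of_transitionMatrix_ne_zero hab') (rel_of_transitionMatrix_ne_zero hba)

theorem transitionMatrix_walk_eq_zero
    (hC4 : ∀ a b a' b', p a b → q b a' → p a' b' → ¬ q b' a) {a : α} {b : β} (hab : p a b) :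
    (transitionMatrix q * transitionMatrix p * transitionMatrix q) b a = 0 := by
  by_contra h
  obtain ⟨b', hbb', hb'a⟩ := exists_ne_zero_of_mul_apply_ne_zero h
  obtain ⟨a', hba', ha'b'⟩ := exists_ne_zero_of_mul_apply_ne_zero hbb'
  exact hC4 a b a' b' hab (rel_of_transitionMatrix_ne_zero hba')
    (rel_of_transitionMatrix_ne_zero ha'b') (rel_of_transitionMatrix_ne_zero hb'a)

section Tight

variable (hC4 : ∀ a b a' b', p a b → q b a' → p a' b' → ¬ q b' a)
  (hp : ∀ a, Fintype.card β ≤ 3 * #{b | p a b}) (hq : ∀ b, Fintype.card α ≤ 3 * #{a | q b a})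

include hC4 hp hq

theorem weighted_trace_transitionMatrix_eq [Nonempty α] [Nonempty β] :
    Fintype.card β / Fintype.card α * trace (transitionMatrix p * (transitionMatrix p)ᵀ) = 3 ∧
      Fintype.card α / Fintype.card β *
        trace (transitionMatrix q * (transitionMatrix q)ᵀ) = 3 := by
  have hple := weighted_trace_transitionMatrix_le hp
  have hqle := weighted_trace_transitionMatrix_le hq
  have hsum := weighted_trace_eq_six
    (transitionMatrix_mulVec_one (fun _ => exists_rel_of_card_le (hp _)))
    (transitionMatrix_mulVec_one (fun _ => exists_rel_of_card_le (hq _)))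
    (trace_transitionMatrix_mul_eq_zero fun a b hab hba => hC4 a b a b hab hba hab hba)
    (trace_transitionMatrix_mul_mul_self_eq_zero hC4) hple hqle
  constructor <;> linarith

theorem arc_add_arc_add_walk_eq_three [Nonempty α] [Nonempty β] (b : β) (a : α) :
    Fintype.card β * transitionMatrix p a b + Fintype.card α * transitionMatrix q b a +
      Fintype.card α * (transitionMatrix q * transitionMatrix p * transitionMatrix q) b a = 3 := by
  have hpq : ∀ a b, p a b → ¬ q b a := fun a b hab hba => hC4 a b a b hab hba hab hba
  obtain ⟨d, hd⟩ := exists_arc_add_arc_add_walk_eq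
    (transitionMatrix_mulVec_one (fun _ => exists_rel_of_card_le (hp _)))
    (transitionMatrix_mulVec_one (fun _ => exists_rel_of_card_le (hq _)))
    (trace_transitionMatrix_mul_eq_zero hpq) (trace_transitionMatrix_mul_mul_self_eq_zero hC4)
    (weighted_trace_transitionMatrix_le hp) (weighted_trace_transitionMatrix_le hq)
  obtain ⟨b₀, hb₀⟩ := exists_rel_of_card_le (hp a)
  have hq₀ : transitionMatrix q b₀ a = 0 := by
    by_contra h
    exact hpq a b₀ hb₀ (rel_of_transitionMatrix_ne_zero h)
  rw [hd b a, ← hd b₀ a, hq₀, transitionMatrix_walk_eq_zero hC4 hb₀,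
    card_mul_transitionMatrix_of_rel hp (weighted_trace_transitionMatrix_eq hC4 hp hq).1 hb₀]
  ring

theorem card_mul_transitionMatrix_le_three [Nonempty α] [Nonempty β] (b : β) (a : α) :
    Fintype.card α * transitionMatrix q b a ≤ 3 := by
  have hid := arc_add_arc_add_walk_eq_three hC4 hp hq b a
  have hwalk := mul_apply_nonneg (mul_apply_nonneg (transitionMatrix_nonneg (p := q))
    (transitionMatrix_nonneg (p := p))) (transitionMatrix_nonneg (p := q)) b a
  linarith [mul_nonneg (Nat.cast_nonneg (α := ℝ) (Fintype.card β))
    (transitionMatrix_nonneg (p := p) a b),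
    mul_nonneg (Nat.cast_nonneg (α := ℝ) (Fintype.card α)) hwalk]

theorem not_rel_of_walk {b y : β} {x a : α} (hbx : q b x) (hxy : p x y) (hya : q y a) :
    ¬ q b a := by
  have : Nonempty α := ⟨a⟩
  have : Nonempty β := ⟨b⟩
  intro hba
  have hid := arc_add_arc_add_walk_eq_three hC4 hp hq b a
  rw [card_mul_transitionMatrix_of_rel hq (weighted_trace_transitionMatrix_eq hC4 hp hq).2 hba]
    at hid
  have hwalk : 0 < (transitionMatrix q * transitionMatrix p * transitionMatrix q) b a :=
    mul_apply_pos (mul_apply_nonneg transitionMatrix_nonneg transitionMatrix_nonneg)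
      transitionMatrix_nonneg (mul_apply_pos transitionMatrix_nonneg transitionMatrix_nonneg
        (transitionMatrix_pos hbx) (transitionMatrix_pos hxy)) (transitionMatrix_pos hya)
  have hα : (0 : ℝ) < Fintype.card α := by positivity
  linarith [mul_pos hα hwalk, mul_nonneg (Nat.cast_nonneg (α := ℝ) (Fintype.card β))
    (transitionMatrix_nonneg (p := p) a b)]

theorem rel_of_two_step_of_not_rel {b y : β} {x a : α} (hbx : q b x) (hxy : p x y)
    (hba : ¬ q b a) (hab : ¬ p a b) : q y a := by
  have : Nonempty α := ⟨a⟩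
  have : Nonempty β := ⟨b⟩
  have hid := arc_add_arc_add_walk_eq_three hC4 hp hq b a
  rw [not_imp_comm.1 rel_of_transitionMatrix_ne_zero hab,
    not_imp_comm.1 rel_of_transitionMatrix_ne_zero hba, mul_zero, mul_zero, zero_add, zero_add]
    at hid
  have hQP : (transitionMatrix q * transitionMatrix p) *ᵥ 1 = 1 := by
    rw [← mulVec_mulVec, transitionMatrix_mulVec_one fun _ => exists_rel_of_card_le (hp _),
      transitionMatrix_mulVec_one fun _ => exists_rel_of_card_le (hq _)]
  have haverage : (transitionMatrix q * transitionMatrix p) b ⬝ᵥ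
      (fun y => Fintype.card α * transitionMatrix q y a) = 3 := by
    rw [← hid, mul_apply, mul_sum]
    exact sum_congr rfl fun y _ => mul_left_comm _ _ _
  have hya := eq_of_dotProduct_eq_of_le
    (mul_apply_nonneg transitionMatrix_nonneg transitionMatrix_nonneg b) (congrFun hQP b)
    (fun y => card_mul_transitionMatrix_le_three hC4 hp hq y a) haverage
    (mul_apply_pos transitionMatrix_nonneg transitionMatrix_nonneg (transitionMatrix_pos hbx)
      (transitionMatrix_pos hxy))
  exact rel_of_transitionMatrix_ne_zero fun h => by simp [h] at hya

theorem rel_iff_of_two_step {b y : β} {x a : α} (hbx : q b x) (hxy : p x y) :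
    q y a ↔ ¬ q b a ∧ ¬ p a b :=
  ⟨fun hya => ⟨not_rel_of_walk hC4 hp hq hbx hxy hya, fun hab => hC4 a b x y hab hbx hxy hya⟩,
    fun h => rel_of_two_step_of_not_rel hC4 hp hq hbx hxy h.1 h.2⟩

end Tight

end NoClosedFourWalk

theorem three_mul_card_eq {V : Type*} [DecidableEq V] {S : Finset V} {M : ZMod 3 → Finset V}
    (hdisj : ∀ i j, i ≠ j → Disjoint (M i) (M j)) (hunion : M 0 ∪ M 1 ∪ M 2 = S)
    (hcard : ∀ i, #S ≤ 3 * #(M i)) (i : ZMod 3) : 3 * #(M i) = #S := by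
  have hsum : #(M 0) + #(M 1) + #(M 2) = #S := by
    rw [← hunion, card_union_of_disjoint (disjoint_union_left.2
      ⟨hdisj 0 2 (by decide), hdisj 1 2 (by decide)⟩), card_union_of_disjoint
      (hdisj 0 1 (by decide))]
  have h0 := hcard 0
  have h1 := hcard 1
  have h2 := hcard 2
  have hi : i = 0 ∨ i = 1 ∨ i = 2 := by decide +revert
  rcases hi with rfl | rfl | rfl <;> lia

/-- The out-neighbours of `u`, so that `OutDeg E u` is the size of this set. -/
def outNeighbors {V : Type*} [Fintype V] (E : V → V → Prop) [DecidableRel E] (u : V) : Finset V :=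
  {v | E u v}

theorem mem_outNeighbors {V : Type*} [Fintype V] {E : V → V → Prop} [DecidableRel E] {u v : V} :
    v ∈ outNeighbors E u ↔ E u v :=
  mem_filter_univ v

section TwoStepComplemented

variable {V : Type*} {A : Finset V} {E : V → V → Prop}

/-- A digraph with bipartition `(A, Aᶜ)` and without sinks in which the out-neighbours of any
vertex two steps after `u` are exactly the vertices of the part opposite to `u` that are not
adjacent to `u`. The condition that `u` and `v` lie in opposite parts is written `u ∈ A ↔ v ∉ A`. -/
structure IsTwoStepComplemented (A : Finset V) (E : V → V → Prop) : Prop where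
  opposite : ∀ {u v}, E u v → (u ∈ A ↔ v ∉ A)
  exists_succ : ∀ u, ∃ v, E u v
  two_step : ∀ {u x y v}, E u x → E x y → (u ∈ A ↔ v ∉ A) → (E y v ↔ ¬E u v ∧ ¬E v u)

namespace IsTwoStepComplemented

theorem asymm (h : IsTwoStepComplemented A E) {u v : V} (huv : E u v) : ¬E v u := fun hvu =>
  ((h.two_step huv hvu (h.opposite huv)).1 huv).1 huv

theorem mem_iff_of_two_step (h : IsTwoStepComplemented A E) {u x y : V} (hux : E u x)
    (hxy : E x y) : y ∈ A ↔ u ∈ A := by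
  rw [h.opposite hux, h.opposite hxy, not_not]

theorem rel_of_rel_of_two_step (h : IsTwoStepComplemented A E) {u x y v : V} (hux : E u x)
    (hxy : E x y) (huv : E u v) : E v y := by
  by_contra hvy
  obtain ⟨z, hvz⟩ := h.exists_succ v
  obtain ⟨t, hzt⟩ := h.exists_succ z
  have hu := h.opposite hux
  have hx := h.opposite hxy
  have hv := h.opposite huv
  have hz := h.opposite hvz
  have ht := h.opposite hzt
  have hyv : ¬E y v := fun hyv => ((h.two_step hux hxy hv).1 hyv).1 huv
  have hut := (h.two_step huv hvz (by tauto)).1 hzt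
  have hyt : E y t := (h.two_step hux hxy (by tauto)).2 hut
  have hty : E t y := (h.two_step hvz hzt (by tauto)).2 ⟨hvy, hyv⟩
  exact h.asymm hyt hty

theorem rel_of_two_step_of_rel (h : IsTwoStepComplemented A E) {u x y v : V} (hux : E u x)
    (hxy : E x y) (hvy : E v y) : E u v := by
  by_contra huv
  have hu := h.opposite hux
  have hx := h.opposite hxy
  have hv := h.opposite hvy
  have hvu : E v u := by
    by_contra hvu
    exact h.asymm hvy ((h.two_step hux hxy (by tauto)).2 ⟨huv, hvu⟩)
  exact ((h.two_step hvu hux hv).1 hxy).1 hvy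

theorem rel_two_step_iff (h : IsTwoStepComplemented A E) {u x y v : V} (hux : E u x)
    (hxy : E x y) : E v y ↔ E u v :=
  ⟨h.rel_of_two_step_of_rel hux hxy, h.rel_of_rel_of_two_step hux hxy⟩

theorem rel_iff_of_common_pred (h : IsTwoStepComplemented A E) {w y y' v : V} (hy : E w y)
    (hy' : E w y') : E y v ↔ E y' v :=
  ⟨fun hyv => h.rel_of_rel_of_two_step hy hyv hy', fun hyv => h.rel_of_rel_of_two_step hy' hyv hy⟩

theorem rel_first_of_four_step (h : IsTwoStepComplemented A E) {u x y z w v : V} (hux : E u x)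
    (hxy : E x y) (hyz : E y z) (hzw : E z w) (hwv : E w v) : E v u := by
  have hu := h.opposite hux
  have hx := h.opposite hxy
  have hy := h.opposite hyz
  have hz := h.opposite hzw
  have hw := h.opposite hwv
  have hyv := (h.two_step hyz hzw (by tauto)).1 hwv
  have huv : ¬E u v := fun huv => hyv.2 ((h.rel_two_step_iff hux hxy).2 huv)
  by_contra hvu
  exact hyv.1 ((h.two_step hux hxy (by tauto)).2 ⟨huv, hvu⟩)

theorem exists_hexagon (h : IsTwoStepComplemented A E) {u : V} (hu : u ∈ A) :
    ∃ a b : ZMod 3 → V, (∀ i, a i ∈ A) ∧ (∀ i, E (b i) (a i)) ∧ ∀ i, E (a i) (b (i + 1)) := by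
  obtain ⟨b₁, h₀⟩ := h.exists_succ u
  obtain ⟨a₁, h₁⟩ := h.exists_succ b₁
  obtain ⟨b₂, h₂⟩ := h.exists_succ a₁
  obtain ⟨a₂, h₃⟩ := h.exists_succ b₂
  obtain ⟨b₀, h₄⟩ := h.exists_succ a₂
  have h₅ : E b₀ u := h.rel_first_of_four_step h₀ h₁ h₂ h₃ h₄
  have ha₁ : a₁ ∈ A := (h.mem_iff_of_two_step h₀ h₁).2 hu
  have ha₂ : a₂ ∈ A := (h.mem_iff_of_two_step h₂ h₃).2 ha₁
  refine ⟨![u, a₁, a₂], ![b₀, b₁, b₂], fun i => ?_, fun i => ?_, fun i => ?_⟩ <;>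
    fin_cases i <;> assumption

section TwoStepCycle

variable {c : ZMod 3 → V}

theorem rel_two_step_cycle_iff (h : IsTwoStepComplemented A E)
    (hc : ∀ i, ∃ x, E (c i) x ∧ E x (c (i + 1))) {i : ZMod 3} {v : V} (hv : c i ∈ A ↔ v ∉ A) :
    E (c (i + 1)) v ↔ ¬E (c i) v ∧ ¬E (c (i + 2)) v := by
  obtain ⟨x, hx, hx'⟩ := hc i
  obtain ⟨y, hy, hy'⟩ := hc (i + 2)
  have hcycle : i + 2 + 1 = i := by rw [add_assoc, show (2 + 1 : ZMod 3) = 0 from rfl, add_zero]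
  rw [hcycle] at hy'
  rw [h.two_step hx hx' hv, h.rel_two_step_iff hy hy']

theorem not_rel_two_step_cycle (h : IsTwoStepComplemented A E)
    (hc : ∀ i, ∃ x, E (c i) x ∧ E x (c (i + 1))) {i j : ZMod 3} (hij : i ≠ j) {v : V}
    (hi : E (c i) v) : ¬E (c j) v := by
  have hcases : ∀ i j : ZMod 3, i ≠ j → j = i + 1 ∨ i = j + 1 := by decide
  rcases hcases i j hij with rfl | rfl
  · exact fun hj => ((h.rel_two_step_cycle_iff hc (h.opposite hi)).1 hj).1 hi
  · exact fun hj => ((h.rel_two_step_cycle_iff hc (h.opposite hj)).1 hi).1 hj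

theorem exists_rel_two_step_cycle (h : IsTwoStepComplemented A E)
    (hc : ∀ i, ∃ x, E (c i) x ∧ E x (c (i + 1))) {v : V} {i : ZMod 3} (hv : c i ∈ A ↔ v ∉ A) :
    ∃ j, E (c j) v := by
  by_contra! hnot
  exact hnot (i + 1) ((h.rel_two_step_cycle_iff hc hv).2 ⟨hnot i, hnot (i + 2)⟩)

variable [Fintype V] [DecidableRel E]

theorem disjoint_outNeighbors_two_step_cycle (h : IsTwoStepComplemented A E)
    (hc : ∀ i, ∃ x, E (c i) x ∧ E x (c (i + 1))) {i j : ZMod 3} (hij : i ≠ j) :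
    Disjoint (outNeighbors E (c i)) (outNeighbors E (c j)) :=
  disjoint_filter.2 fun _ _ => h.not_rel_two_step_cycle hc hij

theorem union_outNeighbors_two_step_cycle [DecidableEq V] (h : IsTwoStepComplemented A E)
    (hc : ∀ i, ∃ x, E (c i) x ∧ E x (c (i + 1))) {S : Finset V}
    (hS : ∀ i v, v ∈ S ↔ (c i ∈ A ↔ v ∉ A)) :
    outNeighbors E (c 0) ∪ outNeighbors E (c 1) ∪ outNeighbors E (c 2) = S := by
  ext v
  simp only [mem_union, mem_outNeighbors]
  refine ⟨?_, fun hv => ?_⟩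
  · rintro ((hv | hv) | hv) <;> exact (hS _ v).2 (h.opposite hv)
  · obtain ⟨i, hi⟩ := h.exists_rel_two_step_cycle hc ((hS 0 v).1 hv)
    fin_cases i
    exacts [.inl (.inl hi), .inl (.inr hi), .inr hi]

end TwoStepCycle

theorem rel_iff_of_hexagon (h : IsTwoStepComplemented A E) {a b : ZMod 3 → V} (ha : ∀ i, a i ∈ A)
    (hba : ∀ i, E (b i) (a i)) (hab : ∀ i, E (a i) (b (i + 1))) {u v : V} :
    E u v ↔ ∃ i, (E (b i) u ∧ E (a i) v) ∨ (E (a i) u ∧ E (b (i + 1)) v) := by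
  constructor
  · intro huv
    by_cases hu : u ∈ A
    · have hb : b 0 ∈ A ↔ u ∉ A := by simp [h.opposite (hba 0), ha, hu]
      obtain ⟨i, hi⟩ := h.exists_rel_two_step_cycle (fun i => ⟨a i, hba i, hab i⟩) hb
      exact ⟨i, .inl ⟨hi, (h.rel_iff_of_common_pred hi (hba i)).1 huv⟩⟩
    · obtain ⟨i, hi⟩ := h.exists_rel_two_step_cycle (fun i => ⟨_, hab i, hba _⟩)
        (i := 0) (iff_of_true (ha 0) hu)
      exact ⟨i, .inr ⟨hi, (h.rel_iff_of_common_pred hi (hab i)).1 huv⟩⟩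
  · rintro ⟨i, ⟨hu, hv⟩ | ⟨hu, hv⟩⟩
    · exact (h.rel_iff_of_common_pred hu (hba i)).2 hv
    · exact (h.rel_iff_of_common_pred hu (hab i)).2 hv

variable [Fintype V] [DecidableEq V] [DecidableRel E]

theorem isDStar (h : IsTwoStepComplemented A E) (hA : A.Nonempty) {B : Finset V}
    (hB : ∀ v, v ∈ B ↔ v ∉ A) (hdegA : ∀ u ∈ A, #B ≤ 3 * OutDeg E u)
    (hdegB : ∀ v ∈ B, #A ≤ 3 * OutDeg E v) : IsDStar A B E := by
  obtain ⟨u₀, hu₀⟩ := hA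
  obtain ⟨a, b, ha, hba, hab⟩ := h.exists_hexagon hu₀
  have hb : ∀ i, b i ∉ A := fun i hbi => (h.opposite (hba i)).1 hbi (ha i)
  have hca : ∀ i, ∃ x, E (a i) x ∧ E x (a (i + 1)) := fun i => ⟨_, hab i, hba _⟩
  have hcb : ∀ i, ∃ x, E (b i) x ∧ E x (b (i + 1)) := fun i => ⟨_, hba i, hab i⟩
  have hMdisj := fun i j (hij : i ≠ j) => h.disjoint_outNeighbors_two_step_cycle hcb hij
  have hNdisj := fun i j (hij : i ≠ j) => h.disjoint_outNeighbors_two_step_cycle hca hij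
  have hMunion := h.union_outNeighbors_two_step_cycle hcb (S := A) fun i v => by simp [hb]
  have hNunion := h.union_outNeighbors_two_step_cycle hca (S := B) fun i v => by simp [ha, hB]
  refine ⟨fun i => outNeighbors E (b i), fun i => outNeighbors E (a i), hMdisj, hNdisj, hMunion,
    hNunion, three_mul_card_eq hMdisj hMunion fun i => hdegB _ ((hB _).2 (hb i)),
    three_mul_card_eq hNdisj hNunion fun i => hdegA _ (ha i), fun u v => ?_⟩
  simpa only [mem_outNeighbors] using h.rel_iff_of_hexagon ha hba hab

end IsTwoStepComplemented

end TwoStepComplemented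

section Bipartite

variable {V : Type*} {E : V → V → Prop}

theorem hasDirC4_of_closed_walk (horient : ∀ u v, E u v → ¬E v u) {a b c d : V} (hab : E a b)
    (hbc : E b c) (hcd : E c d) (hda : E d a) : HasDirC4 E := by
  have hne : ∀ {u v}, E u v → u ≠ v := by
    rintro u _ huv rfl
    exact horient u u huv huv
  have hne₂ : ∀ {u v w}, E u v → E v w → u ≠ w := by
    rintro u v _ huv hvw rfl
    exact horient u v huv hvw
  exact ⟨a, b, c, d, hne hab, hne₂ hab hbc, (hne hda).symm, hne hbc, hne₂ hbc hcd, hne hcd,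
    hab, hbc, hcd, hda⟩

theorem mem_right_iff_notMem_left [Fintype V] [DecidableEq V] {A B : Finset V}
    (hdisj : Disjoint A B) (hcover : A ∪ B = univ) (v : V) : v ∈ B ↔ v ∉ A := by
  have hv : v ∈ A ∪ B := hcover ▸ mem_univ v
  exact ⟨fun hB hA => disjoint_left.1 hdisj hA hB, (mem_union.1 hv).resolve_left⟩

variable [Fintype V] [DecidableRel E]

theorem card_filter_subtype_eq_outDeg {S : Finset V} {u : V} (hu : ∀ v, E u v → v ∈ S) :
    #{v : S | E u v} = OutDeg E u := by
  rw [OutDeg, ← card_map (Function.Embedding.subtype _)]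
  congr 1
  ext v
  simpa using hu v

theorem rel_iff_of_two_step_of_mem {A B : Finset V} (hAB : ∀ u ∈ A, ∀ v, E u v → v ∈ B)
    (hBA : ∀ u ∈ B, ∀ v, E u v → v ∈ A)
    (hC4 : ∀ a b c d, E a b → E b c → E c d → ¬E d a) (hdegA : ∀ u ∈ A, #B ≤ 3 * OutDeg E u)
    (hdegB : ∀ u ∈ B, #A ≤ 3 * OutDeg E u) {u x y v : V} (hu : u ∈ B) (hv : v ∈ A)
    (hux : E u x) (hxy : E x y) : E y v ↔ ¬E u v ∧ ¬E v u := by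
  have hx : x ∈ A := hBA u hu x hux
  have hy : y ∈ B := hAB x hx y hxy
  refine rel_iff_of_two_step (p := fun (a : A) (b : B) => E a b)
    (q := fun (b : B) (a : A) => E b a) (b := ⟨u, hu⟩) (x := ⟨x, hx⟩) (y := ⟨y, hy⟩) (a := ⟨v, hv⟩)
    (fun a b a' b' => hC4 a b a' b') (fun a => ?_) (fun b => ?_) hux hxy
  · rw [Fintype.card_coe, card_filter_subtype_eq_outDeg (hAB a a.2)]
    exact hdegA a a.2
  · rw [Fintype.card_coe, card_filter_subtype_eq_outDeg (hBA b b.2)]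
    exact hdegB b b.2

theorem isTwoStepComplemented_of_no_closed_walk {A B : Finset V} (hA : A.Nonempty)
    (hBne : B.Nonempty) (hB : ∀ v, v ∈ B ↔ v ∉ A) (hbip : ∀ {u v}, E u v → (u ∈ A ↔ v ∉ A))
    (hC4 : ∀ a b c d, E a b → E b c → E c d → ¬E d a) (hdegA : ∀ u ∈ A, #B ≤ 3 * OutDeg E u)
    (hdegB : ∀ u ∈ B, #A ≤ 3 * OutDeg E u) : IsTwoStepComplemented A E := by
  have hAB : ∀ u ∈ A, ∀ v, E u v → v ∈ B := fun u hu v huv => (hB v).2 ((hbip huv).1 hu)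
  have hBA : ∀ u ∈ B, ∀ v, E u v → v ∈ A := fun u hu v huv =>
    not_not.1 (mt (hbip huv).2 ((hB u).1 hu))
  refine ⟨hbip, fun u => ?_, fun {u x y v} hux hxy huv => ?_⟩
  · have hdeg : 0 < OutDeg E u := by
      by_cases hu : u ∈ A
      · have := hdegA u hu
        have := hBne.card_pos
        lia
      · have := hdegB u ((hB u).2 hu)
        have := hA.card_pos
        lia
    obtain ⟨v, hv⟩ := card_pos.1 hdeg
    exact ⟨v, (mem_filter_univ v).1 hv⟩
  · by_cases hu : u ∈ A
    · exact rel_iff_of_two_step_of_mem hBA hAB hC4 hdegB hdegA hu ((hB v).2 (huv.1 hu)) hux hxy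
    · exact rel_iff_of_two_step_of_mem hAB hBA hC4 hdegA hdegB ((hB u).2 hu)
        (not_not.1 (mt huv.2 hu)) hux hxy

end Bipartite

theorem directed_C4_or_extremal {V : Type*} [Fintype V] [DecidableEq V]
    (A B : Finset V) (E : V → V → Prop) [DecidableRel E]
    (m n : ℕ) (hAcard : A.card = m) (hBcard : B.card = n)
    (hm : 2 ≤ m) (hn : 2 ≤ n)
    (hdisj : Disjoint A B) (hcover : A ∪ B = Finset.univ)
    (hbip : ∀ u v, E u v → (u ∈ A ∧ v ∈ B) ∨ (u ∈ B ∧ v ∈ A))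
    (horient : ∀ u v, E u v → ¬ E v u)
    (hdegA : ∀ u ∈ A, n ≤ 3 * OutDeg E u)
    (hdegB : ∀ v ∈ B, m ≤ 3 * OutDeg E v)
    (hnotextremal : ¬ IsDStar A B E) :
    HasDirC4 E := by
  subst hAcard hBcard
  by_contra hC4
  have hB := mem_right_iff_notMem_left hdisj hcover
  have hA : A.Nonempty := card_pos.1 (by lia)
  have hbip' : ∀ {u v}, E u v → (u ∈ A ↔ v ∉ A) := fun {u v} huv => by
    have := hbip u v huv
    simp only [hB] at this
    tauto
  have hstructure : IsTwoStepComplemented A E :=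
    isTwoStepComplemented_of_no_closed_walk hA (card_pos.1 (by lia)) hB hbip'
      (fun _ _ _ _ hab hbc hcd hda => hC4 (hasDirC4_of_closed_walk horient hab hbc hcd hda))
      hdegA hdegB
  exact hnotextremal (hstructure.isDStar hA hB hdegA hdegB)
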